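/- Let s ≥ 2 and let n₁, …, n_s be integers which all have the same parity (nᵢ ≡ nⱼ (mod 2) for all i, j). Suppose that for some integer n the ordered product (X₁^{−n₁} · X₂ · X₁^{n₁}) · (X₁^{−n₂} · X₂ · X₁^{n₂}) ⋯ (X₁^{−n_s} · X₂ · X₁^{n_s}) equals X₁^n or −X₁^n. Then there exists an index i ∈ {1, …, s−1} with nᵢ − n_{i+1} = 2. -/

import Mathlib

/-- `X₁` is the matrix with rows `(1,0), (1,1)` in `SL(2,ℤ)`. -/
def X₁ : Matrix.SpecialLinearGroup (Fin 2) ℤ :=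
  ⟨!![1, 0; 1, 1], by simp [Matrix.det_fin_two_of]⟩

/-- `X₂` is the matrix with rows `(1,-1), (0,1)` in `SL(2,ℤ)`. -/
def X₂ : Matrix.SpecialLinearGroup (Fin 2) ℤ :=
  ⟨!![1, -1; 0, 1], by simp [Matrix.det_fin_two_of]⟩

lemma X₁_zpow (k : ℤ) : ((X₁ ^ k : Matrix.SpecialLinearGroup (Fin 2) ℤ) : Matrix (Fin 2) (Fin 2) ℤ)
    = !![1, 0; k, 1] := by
  induction k using Int.induction_on with
  | zero => ext i j; fin_cases i <;> fin_cases j <;> simp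
  | succ i ih =>
    rw [zpow_add_one, Matrix.SpecialLinearGroup.coe_mul, ih]
    ext i j
    fin_cases i <;> fin_cases j <;> simp [X₁, Matrix.mul_apply, Fin.sum_univ_two]
  | pred i ih =>
    rw [zpow_sub_one, Matrix.SpecialLinearGroup.coe_mul, ih, Matrix.SpecialLinearGroup.coe_inv]
    ext i j
    fin_cases i <;> fin_cases j <;>
      simp [X₁, Matrix.mul_apply, Fin.sum_univ_two, Matrix.adjugate_fin_two] <;> ring

/-- Effect of a conjugated twist on the second column. -/
lemma step_apply (m : ℤ) (P : Matrix.SpecialLinearGroup (Fin 2) ℤ) :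
    (X₁ ^ (-m) * X₂ * X₁ ^ m * P) 0 1 = P 0 1 - (P 1 1 + m * P 0 1) ∧
    (X₁ ^ (-m) * X₂ * X₁ ^ m * P) 1 1
      = (P 1 1 + m * P 0 1) - m * (P 0 1 - (P 1 1 + m * P 0 1)) := by
  simp only [Matrix.SpecialLinearGroup.coe_mul, X₁_zpow]
  constructor <;> simp [X₂, Matrix.mul_apply, Fin.sum_univ_two] <;> ring

lemma invariant (s : ℕ) (ns : Fin (s + 1) → ℤ)
    (hpar : ∀ i j, ns i % 2 = ns j % 2)
    (hne : ∀ i : ℕ, ∀ h : i + 1 < s + 1, ns ⟨i, by omega⟩ - ns ⟨i + 1, h⟩ ≠ 2)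
    (P : Matrix.SpecialLinearGroup (Fin 2) ℤ)
    (hP : P = (List.ofFn fun i => X₁ ^ (-(ns i)) * X₂ * X₁ ^ (ns i)).prod) :
    P 0 1 ≠ 0 ∧ |P 0 1 + P 1 1 + ns 0 * P 0 1| ≤ |P 0 1| := by
  induction s generalizing P with
  | zero =>
    obtain ⟨h0, h1⟩ := step_apply (ns 0) 1
    rw [List.ofFn_succ, List.prod_cons] at hP
    simp only [List.ofFn_zero, List.prod_nil] at hP
    rw [hP, h0, h1]
    simp
  | succ s ih =>
    rw [List.ofFn_succ, List.prod_cons] at hP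
    obtain ⟨hx, hz⟩ := ih (fun i => ns i.succ) (fun i j => hpar _ _)
      (fun i h => hne (i + 1) (by omega)) _ rfl
    have h2 := hne 0 (by omega)
    have hp := hpar 0 (Fin.succ 0)
    change ns 0 - ns (Fin.succ 0) ≠ 2 at h2
    generalize (List.ofFn fun i : Fin (s + 1) =>
      X₁ ^ (-(ns i.succ)) * X₂ * X₁ ^ (ns i.succ)).prod = Q at *
    obtain ⟨h0, h1⟩ := step_apply (ns 0) Q
    rw [hP, h0, h1]
    generalize ns (Fin.succ 0) = n at *
    generalize ns 0 = m at *
    generalize Q 0 1 = x at *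
    generalize Q 1 1 = y at *
    have he : 2 ≤ |2 + n - m| := by
      rw [le_abs]; omega
    have hxp : 0 < |x| := abs_pos.mpr hx
    have key : |x| ≤ |x - (y + m * x)| := by
      have e1 : x - (y + m * x) = (2 + n - m) * x - (x + y + n * x) := by ring
      have e2 := abs_sub_abs_le_abs_sub ((2 + n - m) * x) (x + y + n * x)
      rw [abs_mul] at e2
      rw [e1]
      nlinarith
    refine ⟨abs_pos.mp (by omega), ?_⟩
    have e3 : x - (y + m * x) + (y + m * x - m * (x - (y + m * x))) + m * (x - (y + m * x)) = x := by
      ring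
    rw [e3]
    exact key

/-- Let `s ≥ 2` and let `n₁, …, n_s` be integers all of the same parity.  If the ordered
product `(X₁^{-n₁} X₂ X₁^{n₁}) ⋯ (X₁^{-n_s} X₂ X₁^{n_s})` equals `X₁^n` or `-X₁^n` for
some integer `n`, then `nᵢ - n_{i+1} = 2` for some index `i ∈ {1, …, s-1}`. -/
theorem stmt5 (s : ℕ) (hs : 2 ≤ s) (ns : Fin s → ℤ)
    (hpar : ∀ i j, ns i % 2 = ns j % 2) (n : ℤ)
    (hprod : (List.ofFn fun i => X₁ ^ (-(ns i)) * X₂ * X₁ ^ (ns i)).prod = X₁ ^ n ∨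
             (List.ofFn fun i => X₁ ^ (-(ns i)) * X₂ * X₁ ^ (ns i)).prod = -(X₁ ^ n)) :
    ∃ i : ℕ, ∃ h : i + 1 < s, ns ⟨i, by omega⟩ - ns ⟨i + 1, h⟩ = 2 := by
  by_contra! hcon
  obtain ⟨t, rfl⟩ : ∃ t, s = t + 1 := ⟨s - 1, by omega⟩
  obtain ⟨hx, -⟩ := invariant t ns hpar hcon _ rfl
  apply hx
  rcases hprod with h | h <;> rw [h]
  · rw [X₁_zpow]; simp
  · rw [Matrix.SpecialLinearGroup.coe_neg, X₁_zpow]; simp
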